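/- Let H be a weak Hopf algebra over a field k. Then the antipode S is an algebra antihomomorphism and a coalgebra antihomomorphism: S(xy) = S(y)S(x) for all x,y ∈ H, S(1) = 1, Σ (S(x))⁽¹⁾ ⊗ (S(x))⁽²⁾ = Σ S(x⁽²⁾) ⊗ S(x⁽¹⁾) for all x ∈ H, and ε(S(x)) = ε(x) for all x ∈ H. -/

import Mathlib

open scoped TensorProduct
open TensorProduct LinearMap

/-- A weak bialgebra over a field `k`: an algebra and coalgebra subject to the
weak compatibility axioms (WBA1)-(WBA3). -/
class WeakBialgebra (k H : Type*) [Field k] [Ring H] [Algebra k H]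
    extends Coalgebra k H where
  /-- (WBA1): `Δ(xy) = Δ(x)Δ(y)`. -/
  comul_mul : ∀ x y : H,
    Coalgebra.comul (R := k) (x * y) = Coalgebra.comul (R := k) x * Coalgebra.comul (R := k) y
  /-- (WBA2): `ε(xyz) = Σ ε(xy⁽¹⁾)ε(y⁽²⁾z)`. -/
  counit_mul_mul : ∀ x y z : H,
    Coalgebra.counit (R := k) (x * y * z) =
      TensorProduct.lid k k
        ((TensorProduct.map (Coalgebra.counit ∘ₗ LinearMap.mulLeft k x)
            (Coalgebra.counit ∘ₗ LinearMap.mulRight k z))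
          (Coalgebra.comul (R := k) y))
  /-- (WBA2'): `ε(xyz) = Σ ε(xy⁽²⁾)ε(y⁽¹⁾z)`. -/
  counit_mul_mul' : ∀ x y z : H,
    Coalgebra.counit (R := k) (x * y * z) =
      TensorProduct.lid k k
        ((TensorProduct.map (Coalgebra.counit ∘ₗ LinearMap.mulRight k z)
            (Coalgebra.counit ∘ₗ LinearMap.mulLeft k x))
          (Coalgebra.comul (R := k) y))
  /-- (WBA3): `((Δ⊗id)∘Δ)(1) = (Δ(1)⊗1)·(1⊗Δ(1))`. -/
  comul_comul_one :
    (TensorProduct.map (Coalgebra.comul (R := k)) (LinearMap.id (M := H)))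
        (Coalgebra.comul (R := k) (1 : H)) =
      (Coalgebra.comul (R := k) (1 : H) ⊗ₜ[k] (1 : H)) *
        ((TensorProduct.assoc k H H H).symm ((1 : H) ⊗ₜ[k] Coalgebra.comul (R := k) (1 : H)))
  /-- (WBA3'): `((Δ⊗id)∘Δ)(1) = (1⊗Δ(1))·(Δ(1)⊗1)`. -/
  comul_comul_one' :
    (TensorProduct.map (Coalgebra.comul (R := k)) (LinearMap.id (M := H)))
        (Coalgebra.comul (R := k) (1 : H)) =
      ((TensorProduct.assoc k H H H).symm ((1 : H) ⊗ₜ[k] Coalgebra.comul (R := k) (1 : H))) *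
        (Coalgebra.comul (R := k) (1 : H) ⊗ₜ[k] (1 : H))

variable (k H : Type*) [Field k] [Ring H] [Algebra k H]

/-- The target counital map `ε_t(x) = Σ ε(1⁽¹⁾x)·1⁽²⁾`. -/
noncomputable def εt [WeakBialgebra k H] : H →ₗ[k] H :=
  (TensorProduct.lid k H).toLinearMap ∘ₗ
    (LinearMap.rTensor H (Coalgebra.counit (R := k) (A := H))) ∘ₗ
    (LinearMap.mulLeft k (Coalgebra.comul (R := k) (1 : H))) ∘ₗ
    ((TensorProduct.mk k H H).flip 1)

/-- The source counital map `ε_s(x) = Σ 1⁽¹⁾·ε(x1⁽²⁾)`. -/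
noncomputable def εs [WeakBialgebra k H] : H →ₗ[k] H :=
  (TensorProduct.rid k H).toLinearMap ∘ₗ
    (LinearMap.lTensor H (Coalgebra.counit (R := k) (A := H))) ∘ₗ
    (LinearMap.mulRight k (Coalgebra.comul (R := k) (1 : H))) ∘ₗ
    (TensorProduct.mk k H H 1)

/-- The target base algebra `H_t = ε_t(H)`. -/
noncomputable def Ht [WeakBialgebra k H] : Submodule k H := LinearMap.range (εt k H)

/-- The source base algebra `H_s = ε_s(H)`. -/
noncomputable def Hs [WeakBialgebra k H] : Submodule k H := LinearMap.range (εs k H)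

/-- A weak Hopf algebra: a weak bialgebra with an antipode `S` satisfying
`Σ x⁽¹⁾S(x⁽²⁾) = ε_t(x)`, `Σ S(x⁽¹⁾)x⁽²⁾ = ε_s(x)` and `Σ S(x⁽¹⁾)x⁽²⁾S(x⁽³⁾) = S(x)`. -/
class WeakHopfAlgebra extends WeakBialgebra k H where
  antipode : H →ₗ[k] H
  mul_antipode : ∀ x : H,
    LinearMap.mul' k H ((LinearMap.lTensor H antipode) (Coalgebra.comul (R := k) x)) = εt k H x
  antipode_mul : ∀ x : H,
    LinearMap.mul' k H ((LinearMap.rTensor H antipode) (Coalgebra.comul (R := k) x)) = εs k H x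
  antipode_mul_antipode : ∀ x : H,
    LinearMap.mul' k H
      ((TensorProduct.map antipode (LinearMap.mul' k H ∘ₗ LinearMap.lTensor H antipode))
        ((LinearMap.lTensor H (Coalgebra.comul (R := k)))
          (Coalgebra.comul (R := k) x))) = antipode x

/-- The antipode of a weak Hopf algebra, as a linear map. -/
noncomputable def aS [WeakHopfAlgebra k H] : H →ₗ[k] H :=
  WeakHopfAlgebra.antipode (k := k) (H := H)

/-!
An element `s` of a semigroup with `s x s = s` is determined by `x s` and `s x`. So if a
homomorphism `φ` takes the value `φ x = l x * r x` for homomorphisms `l` and `r`, then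
`φ s = r s * l s` as soon as both sides are such outer inverses of `φ x` and agree after
multiplication with `φ x` from the left and from the right.

In the convolution algebra `Hom(H, H)` the antipode is an outer inverse of the identity with
`id * S = ε_t` and `S * id = ε_s`. Taking for `φ` the composition with the comultiplication, into
`Hom(H, H ⊗ H)`, and with the multiplication, into `Hom(H ⊗ H, H)`, gives the two antihomomorphism
properties. What makes `r S * l S` an outer inverse is that `ε_s(x)` and `ε_t(y)` commute, and,
dually, that `Σ ε_s(x⁽²⁾) ⊗ ε_t(x⁽¹⁾) = Σ ε_s(x⁽¹⁾) ⊗ ε_t(x⁽²⁾)`.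
-/

section

open Coalgebra WithConv

section OuterInverse

variable {M N : Type*} [Semigroup M] [Semigroup N]

theorem eq_of_outer_inverse {f g h : M} (hg : g * f * g = g) (hh : h * f * h = h)
    (hfg : f * g = f * h) (hgf : g * f = h * f) : g = h := by
  rw [← hg, mul_assoc, hfg, ← mul_assoc, hgf, hh]

theorem mul_outer_inverse {a b a' b' : M} (ha : a' * a * a' = a') (hb : b' * b * b' = b')
    (hcomm : Commute (a' * a) (b * b')) : b' * a' * (a * b) * (b' * a') = b' * a' :=
  calc b' * a' * (a * b) * (b' * a') = b' * (a' * a * (b * b')) * a' := by simp only [mul_assoc]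
    _ = b' * b * b' * (a' * a * a') := by rw [hcomm.eq]; simp only [mul_assoc]
    _ = b' * a' := by rw [ha, hb]

theorem map_eq_mul_map_of_outer_inverse (φ l r : M →ₙ* N) {x s p q : M} (hp : x * s = p)
    (hq : s * x = q) (hs : q * s = s) (hx : φ x = l x * r x) (hcomm : Commute (l q) (r p))
    (hφp : φ p = l x * r p * l s) (hφq : φ q = r s * l q * r x) : φ s = r s * l s := by
  subst hp hq
  refine eq_of_outer_inverse (f := φ x) ?_ ?_ ?_ ?_
  · rw [← map_mul, ← map_mul, hs]
  · rw [hx]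
    refine mul_outer_inverse ?_ ?_ ?_
    · rw [← map_mul, ← map_mul, hs]
    · rw [← map_mul, ← map_mul, hs]
    · rwa [← map_mul, ← map_mul]
  · rw [← map_mul, hφp, hx, map_mul]
    simp only [mul_assoc]
  · rw [← map_mul, hφq, hx, map_mul]
    simp only [mul_assoc]

end OuterInverse

section Contraction

variable {R V W M N P : Type*} [CommSemiring R] [AddCommMonoid V] [AddCommMonoid W]
  [AddCommMonoid M] [AddCommMonoid N] [AddCommMonoid P] [Module R V] [Module R W] [Module R M]
  [Module R N] [Module R P]

/-- The contraction `Σ b(t⁽¹⁾, w) t⁽²⁾` of `t ∈ V ⊗ M` with `w ∈ W` along a bilinear form `b`. -/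
noncomputable def contractFst (b : V →ₗ[R] W →ₗ[R] R) : V ⊗[R] M →ₗ[R] W →ₗ[R] M :=
  TensorProduct.lift (LinearMap.smulRightₗ ∘ₗ b)

/-- The contraction `Σ b(v, u⁽²⁾) u⁽¹⁾` of `u ∈ N ⊗ W` with `v ∈ V` along a bilinear form `b`. -/
noncomputable def contractSnd (b : V →ₗ[R] W →ₗ[R] R) : N ⊗[R] W →ₗ[R] V →ₗ[R] N :=
  TensorProduct.lift (LinearMap.smulRightₗ ∘ₗ b.flip).flip

variable (b : V →ₗ[R] W →ₗ[R] R)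

@[simp]
theorem contractFst_tmul (v : V) (m : M) (w : W) : contractFst b (v ⊗ₜ m) w = b v w • m := rfl

@[simp]
theorem contractSnd_tmul (n : N) (w : W) (v : V) : contractSnd b (n ⊗ₜ w) v = b v w • n := rfl

theorem map_contractFst (g : M →ₗ[R] P) (t : V ⊗[R] M) (w : W) :
    g (contractFst b t w) = contractFst b (g.lTensor V t) w := by
  induction t with
  | zero => simp
  | tmul v m => simp
  | add t₁ t₂ h₁ h₂ => simp [h₁, h₂]

theorem map_contractSnd (g : N →ₗ[R] P) (u : N ⊗[R] W) (v : V) :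
    g (contractSnd b u v) = contractSnd b (g.rTensor W u) v := by
  induction u with
  | zero => simp
  | tmul n w => simp
  | add u₁ u₂ h₁ h₂ => simp [h₁, h₂]

theorem lTensor_contractFst (t : V ⊗[R] M) (u : N ⊗[R] W) :
    (contractFst b t).lTensor N u = (contractSnd b u).rTensor M t := by
  induction t with
  | zero => simp
  | add t₁ t₂ h₁ h₂ => simp [LinearMap.lTensor_add, h₁, h₂]
  | tmul v m =>
    induction u with
    | zero => simp
    | tmul n w => simp [smul_tmul]
    | add u₁ u₂ h₁ h₂ => simp_all [LinearMap.rTensor_add]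

end Contraction

section Associator

variable {R A B C : Type*} [CommSemiring R] [Semiring A] [Algebra R A] [Semiring B] [Algebra R B]
  [Semiring C] [Algebra R C]

theorem assoc_symm_one_tmul_mul (t : B ⊗[R] C) (u : A ⊗[R] B) :
    (TensorProduct.assoc R A B C).symm (1 ⊗ₜ t) * (u ⊗ₜ 1) =
      (LinearMap.mulRight R u ∘ₗ TensorProduct.mk R A B 1).rTensor C t := by
  induction t with
  | zero => simp
  | tmul b c => simp
  | add t₁ t₂ h₁ h₂ => simp [tmul_add, add_mul, h₁, h₂]

theorem tmul_one_mul_assoc_symm (t : B ⊗[R] C) (u : A ⊗[R] B) :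
    (u ⊗ₜ 1) * (TensorProduct.assoc R A B C).symm (1 ⊗ₜ t) =
      (LinearMap.mulLeft R u ∘ₗ TensorProduct.mk R A B 1).rTensor C t := by
  induction t with
  | zero => simp
  | tmul b c => simp
  | add t₁ t₂ h₁ h₂ => simp [tmul_add, mul_add, h₁, h₂]

theorem one_tmul_mul_assoc (t : B ⊗[R] C) (u : A ⊗[R] B) :
    (1 ⊗ₜ t) * TensorProduct.assoc R A B C (u ⊗ₜ 1) =
      (LinearMap.mulLeft R t ∘ₗ (TensorProduct.mk R B C).flip 1).lTensor A u := by
  induction u with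
  | zero => simp
  | tmul a b => simp
  | add t₁ t₂ h₁ h₂ => simp [add_tmul, mul_add, h₁, h₂]

end Associator

section Convolution

variable {R A B C D : Type*} [CommSemiring R] [Semiring A] [Algebra R A] [Semiring B]
  [Algebra R B] [AddCommMonoid C] [Module R C] [Coalgebra R C] [AddCommMonoid D] [Module R D]
  [Coalgebra R D]

/-- Postcomposition with a (possibly non-unital) algebra homomorphism, as a homomorphism of
convolution semigroups. -/
noncomputable def convPostcomp (h : A →ₙₐ[R] B) :
    WithConv (C →ₗ[R] A) →ₙ* WithConv (C →ₗ[R] B) where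
  toFun f := toConv ((h : A →ₗ[R] B) ∘ₗ f.ofConv)
  map_mul' f g := congrArg toConv (LinearMap.nonUnitalAlgHom_comp_convMul_distrib h f g)

/-- Precomposition with a comultiplicative (possibly non-counital) linear map, as a homomorphism
of convolution semigroups. -/
noncomputable def convPrecomp (h : D →ₗ[R] C) (hh : TensorProduct.map h h ∘ₗ comul = comul ∘ₗ h) :
    WithConv (C →ₗ[R] A) →ₙ* WithConv (D →ₗ[R] A) where
  toFun f := toConv (f.ofConv ∘ₗ h)
  map_mul' f g := by
    simp only [LinearMap.convMul_def, TensorProduct.map_comp, LinearMap.comp_assoc, hh]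

/-- The embedding `f ↦ (x ↦ f(x) ⊗ 1)` of convolution semigroups. -/
noncomputable def convTmulOne : WithConv (C →ₗ[R] A) →ₙ* WithConv (C →ₗ[R] A ⊗[R] B) :=
  convPostcomp (Algebra.TensorProduct.includeLeft : A →ₐ[R] A ⊗[R] B)

/-- The embedding `f ↦ (x ↦ 1 ⊗ f(x))` of convolution semigroups. -/
noncomputable def convOneTmul : WithConv (C →ₗ[R] B) →ₙ* WithConv (C →ₗ[R] A ⊗[R] B) :=
  convPostcomp (Algebra.TensorProduct.includeRight : B →ₐ[R] A ⊗[R] B)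

variable (D) in
/-- The map `f ↦ (x ⊗ y ↦ f(x) ε(y))` of convolution semigroups. -/
noncomputable def convFst : WithConv (C →ₗ[R] A) →ₙ* WithConv (C ⊗[R] D →ₗ[R] A) :=
  let fst : C ⊗[R] D →ₗc[R] C := (Coalgebra.TensorProduct.rid R R C).toCoalgHom.comp
    (Coalgebra.TensorProduct.map (.id R C) (counitCoalgHom R D))
  convPrecomp fst.toLinearMap fst.map_comp_comul

variable (C) in
/-- The map `g ↦ (x ⊗ y ↦ ε(x) g(y))` of convolution semigroups. -/
noncomputable def convSnd : WithConv (D →ₗ[R] A) →ₙ* WithConv (C ⊗[R] D →ₗ[R] A) :=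
  let snd : C ⊗[R] D →ₗc[R] D := (Coalgebra.TensorProduct.lid R D).toCoalgHom.comp
    (Coalgebra.TensorProduct.map (counitCoalgHom R C) (.id R D))
  convPrecomp snd.toLinearMap snd.map_comp_comul

@[simp]
theorem convTmulOne_apply (f : WithConv (C →ₗ[R] A)) (x : C) :
    convTmulOne (B := B) f x = f x ⊗ₜ 1 := rfl

@[simp]
theorem convOneTmul_apply (f : WithConv (C →ₗ[R] B)) (x : C) :
    convOneTmul (A := A) f x = 1 ⊗ₜ f x := rfl

@[simp]
theorem convFst_tmul (f : WithConv (C →ₗ[R] A)) (x : C) (y : D) :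
    convFst D f (x ⊗ₜ y) = counit (R := R) y • f x :=
  map_smul f.ofConv _ _

@[simp]
theorem convSnd_tmul (g : WithConv (D →ₗ[R] A)) (x : C) (y : D) :
    convSnd C g (x ⊗ₜ y) = counit (R := R) x • g y :=
  map_smul g.ofConv _ _

theorem convTmulOne_mul_convOneTmul (f : C →ₗ[R] A) (g : C →ₗ[R] B) :
    convTmulOne (toConv f) * convOneTmul (toConv g) = toConv (TensorProduct.map f g ∘ₗ comul) := by
  ext x
  change _ = TensorProduct.map f g (comul x)
  rw [(ℛ R x).convMul_apply, ← (ℛ R x).eq]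
  simp

theorem convOneTmul_mul_convTmulOne (f : C →ₗ[R] A) (g : C →ₗ[R] B) :
    convOneTmul (toConv g) * convTmulOne (toConv f) =
      toConv (TensorProduct.map f g ∘ₗ (TensorProduct.comm R C C).toLinearMap ∘ₗ comul) := by
  ext x
  change _ = TensorProduct.map f g (TensorProduct.comm R C C (comul x))
  rw [(ℛ R x).convMul_apply, ← (ℛ R x).eq]
  simp

theorem mulLeft_comp_convMul (a : A) (f g : WithConv (C →ₗ[R] A)) :
    toConv (LinearMap.mulLeft R a ∘ₗ f.ofConv) * g =
      toConv (LinearMap.mulLeft R a ∘ₗ (f * g).ofConv) := by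
  ext x
  change _ = a * (f * g) x
  rw [(ℛ R x).convMul_apply, (ℛ R x).convMul_apply]
  simp [Finset.mul_sum, mul_assoc]

theorem convMul_mulRight_comp (a : A) (f g : WithConv (C →ₗ[R] A)) :
    f * toConv (LinearMap.mulRight R a ∘ₗ g.ofConv) =
      toConv (LinearMap.mulRight R a ∘ₗ (f * g).ofConv) := by
  ext x
  change _ = (f * g) x * a
  rw [(ℛ R x).convMul_apply, (ℛ R x).convMul_apply]
  simp [Finset.sum_mul, mul_assoc]

theorem convMul_tmul {ι κ : Type*} (F G : WithConv (C ⊗[R] D →ₗ[R] A)) {x : C} {y : D}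
    (r : Repr R x ι) (q : Repr R y κ) :
    (F * G) (x ⊗ₜ y) = ∑ i ∈ r.index, ∑ j ∈ q.index,
      F (r.left i ⊗ₜ q.left j) * G (r.right i ⊗ₜ q.right j) := by
  rw [LinearMap.convMul_apply, TensorProduct.comul_tmul, ← r.eq, ← q.eq]
  simp only [sum_tmul, tmul_sum, map_sum, AlgebraTensorModule.tensorTensorTensorComm_tmul,
    TensorProduct.map_tmul, LinearMap.mul'_apply]
  exact Finset.sum_comm

theorem sum_counit_right_smul {ι : Type*} {x : C} (r : Repr R x ι) :
    ∑ i ∈ r.index, counit (R := R) (r.right i) • r.left i = x := by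
  simpa only [map_sum, TensorProduct.rid_tmul, one_smul] using
    congrArg (TensorProduct.rid R C) (sum_tmul_counit_eq r)

theorem convMul_convFst_tmul (F : WithConv (C ⊗[R] D →ₗ[R] A)) (f : WithConv (C →ₗ[R] A)) (x : C)
    (y : D) : (F * convFst D f) (x ⊗ₜ y) =
      (toConv (F.ofConv ∘ₗ (TensorProduct.mk R C D).flip y) * f) x := by
  rw [convMul_tmul F _ (ℛ R x) (ℛ R y), (ℛ R x).convMul_apply]
  refine Finset.sum_congr rfl fun i _ => ?_
  conv_rhs => rw [← sum_counit_right_smul (ℛ R y)]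
  simp [Finset.sum_mul]

theorem convSnd_convMul_tmul (g : WithConv (D →ₗ[R] A)) (F : WithConv (C ⊗[R] D →ₗ[R] A)) (x : C)
    (y : D) : (convSnd C g * F) (x ⊗ₜ y) =
      (g * toConv (F.ofConv ∘ₗ TensorProduct.mk R C D x)) y := by
  rw [convMul_tmul _ F (ℛ R x) (ℛ R y), (ℛ R y).convMul_apply, Finset.sum_comm]
  refine Finset.sum_congr rfl fun j _ => ?_
  conv_rhs => rw [← sum_counit_smul (ℛ R x)]
  simp [Finset.mul_sum]

theorem convFst_mul_convSnd_tmul (f : WithConv (C →ₗ[R] A)) (g : WithConv (D →ₗ[R] A)) (x : C)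
    (y : D) : (convFst D f * convSnd C g) (x ⊗ₜ y) = f x * g y := by
  rw [convMul_tmul _ _ (ℛ R x) (ℛ R y)]
  conv_rhs => rw [← sum_counit_right_smul (ℛ R x), ← sum_counit_smul (ℛ R y)]
  simp [Finset.sum_mul_sum, smul_smul, mul_comm]

theorem convSnd_mul_convFst_tmul (f : WithConv (C →ₗ[R] A)) (g : WithConv (D →ₗ[R] A)) (x : C)
    (y : D) : (convSnd C g * convFst D f) (x ⊗ₜ y) = g y * f x := by
  rw [convMul_convFst_tmul, (ℛ R x).convMul_apply]
  conv_rhs => rw [← sum_counit_smul (ℛ R x)]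
  simp [Finset.mul_sum]

end Convolution

variable {k H}

namespace WeakBialgebra

variable [WeakBialgebra k H]

variable (k H) in
/-- The bilinear form `(x, y) ↦ ε(xy)`. -/
noncomputable def counitForm : H →ₗ[k] H →ₗ[k] k :=
  (LinearMap.mul k H).compr₂ counit

@[simp]
theorem counitForm_apply (x y : H) : counitForm k H x y = counit (x * y) := rfl

theorem contractFst_counitForm (t : H ⊗[k] H) (x : H) :
    contractFst (counitForm k H) t x =
      TensorProduct.lid k H (counit.rTensor H (t * (x ⊗ₜ 1))) := by
  induction t with
  | zero => simp
  | tmul a b => simp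
  | add t₁ t₂ h₁ h₂ => simp [add_mul, h₁, h₂]

theorem contractSnd_counitForm (u : H ⊗[k] H) (x : H) :
    contractSnd (counitForm k H) u x =
      TensorProduct.rid k H (counit.lTensor H ((1 ⊗ₜ x) * u)) := by
  induction u with
  | zero => simp
  | tmul a b => simp
  | add u₁ u₂ h₁ h₂ => simp [mul_add, h₁, h₂]

theorem εt_eq_contractFst : εt k H = contractFst (counitForm k H) (comul (1 : H)) :=
  LinearMap.ext fun x => (contractFst_counitForm _ x).symm

theorem εs_eq_contractSnd : εs k H = contractSnd (counitForm k H) (comul (1 : H)) :=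
  LinearMap.ext fun x => (contractSnd_counitForm _ x).symm

theorem one_mul_comul (x : H) : comul (R := k) (1 : H) * comul x = comul (R := k) x := by
  rw [← comul_mul, one_mul]

theorem comul_mul_one (x : H) : comul (R := k) x * comul (1 : H) = comul (R := k) x := by
  rw [← comul_mul, mul_one]

theorem εt_one : εt k H 1 = 1 := by
  rw [εt_eq_contractFst, contractFst_counitForm, ← Algebra.TensorProduct.one_def, mul_one]
  simp

theorem counit_contractSnd_comul_mul (x y z : H) :
    counit (R := k) (contractSnd (counitForm k H) (comul y) x * z) =
      counit (R := k) (x * y * z) := by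
  rw [counit_mul_mul']
  induction comul (R := k) y with
  | zero => simp
  | tmul a b => simp [mul_comm]
  | add u₁ u₂ h₁ h₂ => simp [add_mul, h₁, h₂]

theorem counit_contractSnd_comm_comul_mul (x y z : H) :
    counit (R := k) (contractSnd (counitForm k H) (TensorProduct.comm k H H (comul y)) x * z) =
      counit (R := k) (x * y * z) := by
  rw [counit_mul_mul]
  induction comul (R := k) y with
  | zero => simp
  | tmul a b => simp
  | add u₁ u₂ h₁ h₂ => simp [add_mul, h₁, h₂]

theorem counit_εs_mul (x y : H) : counit (R := k) (εs k H x * y) = counit (R := k) (x * y) := by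
  rw [εs_eq_contractSnd, counit_contractSnd_comul_mul, mul_one]

theorem counit_mul_contractFst_comul (x y z : H) :
    counit (R := k) (x * contractFst (counitForm k H) (comul y) z) =
      counit (R := k) (x * y * z) := by
  rw [counit_mul_mul']
  induction comul (R := k) y with
  | zero => simp
  | tmul a b => simp
  | add u₁ u₂ h₁ h₂ => simp [mul_add, h₁, h₂]

theorem counit_mul_εt (x y : H) : counit (R := k) (x * εt k H y) = counit (R := k) (x * y) := by
  rw [εt_eq_contractFst, counit_mul_contractFst_comul, mul_one]

theorem εs_congr {x y : H} (h : ∀ z, counit (R := k) (x * z) = counit (R := k) (y * z)) :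
    εs k H x = εs k H y := by
  rw [εs_eq_contractSnd]
  induction comul (R := k) (1 : H) with
  | zero => simp
  | tmul a b => simp [h]
  | add u₁ u₂ h₁ h₂ => simp [h₁, h₂]

theorem εt_congr {x y : H} (h : ∀ z, counit (R := k) (z * x) = counit (R := k) (z * y)) :
    εt k H x = εt k H y := by
  rw [εt_eq_contractFst]
  induction comul (R := k) (1 : H) with
  | zero => simp
  | tmul a b => simp [h]
  | add u₁ u₂ h₁ h₂ => simp [h₁, h₂]

theorem εs_εs_mul (x y : H) : εs k H (εs k H x * y) = εs k H (x * y) :=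
  εs_congr fun z => by simp only [mul_assoc, counit_εs_mul]

theorem εt_mul_εt (x y : H) : εt k H (x * εt k H y) = εt k H (x * y) :=
  εt_congr fun z => by simp only [← mul_assoc, counit_mul_εt]

theorem rTensor_comul_comul_one_eq_mulRight :
    comul.rTensor H (comul (R := k) (1 : H)) =
      (LinearMap.mulRight k (comul (1 : H)) ∘ₗ TensorProduct.mk k H H 1).rTensor H
        (comul (R := k) (1 : H)) :=
  comul_comul_one'.trans (assoc_symm_one_tmul_mul _ _)

theorem rTensor_comul_comul_one_eq_mulLeft :
    comul.rTensor H (comul (R := k) (1 : H)) =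
      (LinearMap.mulLeft k (comul (1 : H)) ∘ₗ TensorProduct.mk k H H 1).rTensor H
        (comul (R := k) (1 : H)) :=
  comul_comul_one.trans (tmul_one_mul_assoc_symm _ _)

theorem lTensor_comul_comul_one :
    comul.lTensor H (comul (R := k) (1 : H)) =
      (LinearMap.mulLeft k (comul (1 : H)) ∘ₗ (TensorProduct.mk k H H).flip 1).lTensor H
        (comul (R := k) (1 : H)) := by
  have h := congrArg (Algebra.TensorProduct.assoc k k k H H H) (comul_comul_one' (k := k) (H := H))
  rw [map_mul] at h
  rw [← coassoc_apply, ← one_tmul_mul_assoc]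
  exact h.trans (congrArg (· * _) ((TensorProduct.assoc k H H H).apply_symm_apply _))

theorem comul_εs (x : H) :
    comul (R := k) (εs k H x) = (1 ⊗ₜ εs k H x) * comul (R := k) (1 : H) := by
  rw [εs_eq_contractSnd, map_contractSnd, rTensor_comul_comul_one_eq_mulRight, ← map_contractSnd]
  rfl

theorem comul_εs' (x : H) :
    comul (R := k) (εs k H x) = comul (R := k) (1 : H) * (1 ⊗ₜ εs k H x) := by
  rw [εs_eq_contractSnd, map_contractSnd, rTensor_comul_comul_one_eq_mulLeft, ← map_contractSnd]
  rfl

theorem comul_εt (y : H) :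
    comul (R := k) (εt k H y) = comul (R := k) (1 : H) * (εt k H y ⊗ₜ 1) := by
  rw [εt_eq_contractFst, map_contractFst, lTensor_comul_comul_one, ← map_contractFst]
  rfl

theorem comul_εs_mul (x y : H) :
    comul (R := k) (εs k H x * y) = (1 ⊗ₜ εs k H x) * comul (R := k) y := by
  rw [comul_mul, comul_εs, mul_assoc, one_mul_comul]

theorem comul_mul_εt (x y : H) :
    comul (R := k) (x * εt k H y) = comul (R := k) x * (εt k H y ⊗ₜ 1) := by
  rw [comul_mul, comul_εt, ← mul_assoc, comul_mul_one]

theorem commute_εs_εt (x y : H) : Commute (εs k H x) (εt k H y) := by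
  have h : (LinearMap.mulLeft k (εs k H x)).lTensor H (comul (R := k) (1 : H)) =
      (LinearMap.mulRight k (εs k H x)).lTensor H (comul (R := k) (1 : H)) := by
    have h := (comul_εs (k := k) x).symm.trans (comul_εs' x)
    rw [← LinearMap.mulLeft_apply (R := k), ← LinearMap.mulRight_apply (R := k),
      LinearMap.mulLeft_tmul, LinearMap.mulRight_tmul, LinearMap.mulLeft_one,
      LinearMap.mulRight_one] at h
    exact h
  have h' := congrArg (fun t => contractFst (counitForm k H) t y) h
  simp only [← map_contractFst, ← εt_eq_contractFst] at h'
  exact h'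

theorem lTensor_εt_eq (u : H ⊗[k] H) :
    (εt k H).lTensor H u = (contractSnd (counitForm k H) u).rTensor H (comul (1 : H)) := by
  rw [εt_eq_contractFst, lTensor_contractFst]

theorem rTensor_εs_eq (t : H ⊗[k] H) :
    (εs k H).rTensor H t = (contractFst (counitForm k H) t).lTensor H (comul (1 : H)) := by
  rw [εs_eq_contractSnd, lTensor_contractFst]

theorem lTensor_εt_comul (x : H) :
    (εt k H).lTensor H (comul (R := k) x) = comul (R := k) (1 : H) * (x ⊗ₜ 1) := by
  -- Apply `F = (id ⊗ ε)(· Δ(x))` to the first two legs of `(Δ ⊗ id)Δ(1) = (1 ⊗ Δ(1))(Δ(1) ⊗ 1)`.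
  let F : H ⊗[k] H →ₗ[k] H :=
    (TensorProduct.rid k H).toLinearMap ∘ₗ counit.lTensor H ∘ₗ LinearMap.mulRight k (comul x)
  have hF : F ∘ₗ comul = LinearMap.mulRight k x := by
    ext z
    simp [F, ← comul_mul]
  have hF' : F ∘ₗ LinearMap.mulRight k (comul (1 : H)) ∘ₗ TensorProduct.mk k H H 1 =
      contractSnd (counitForm k H) (comul x) := by
    ext z
    simp [F, mul_assoc, one_mul_comul, contractSnd_counitForm]
  have h := congrArg (F.rTensor H) (rTensor_comul_comul_one_eq_mulRight (k := k) (H := H))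
  rw [← LinearMap.rTensor_comp_apply, ← LinearMap.rTensor_comp_apply, hF, hF'] at h
  rw [lTensor_εt_eq, ← h, ← LinearMap.mulRight_apply (R := k), LinearMap.mulRight_tmul,
    LinearMap.mulRight_one]
  rfl

theorem rTensor_εs_comul (x : H) :
    (εs k H).rTensor H (comul (R := k) x) = (1 ⊗ₜ x) * comul (R := k) (1 : H) := by
  let F : H ⊗[k] H →ₗ[k] H :=
    (TensorProduct.lid k H).toLinearMap ∘ₗ counit.rTensor H ∘ₗ LinearMap.mulLeft k (comul x)
  have hF : F ∘ₗ comul = LinearMap.mulLeft k x := by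
    ext z
    simp [F, ← comul_mul]
  have hF' : F ∘ₗ LinearMap.mulLeft k (comul (1 : H)) ∘ₗ (TensorProduct.mk k H H).flip 1 =
      contractFst (counitForm k H) (comul x) := by
    ext z
    simp [F, ← mul_assoc, comul_mul_one, contractFst_counitForm]
  have h := congrArg (F.lTensor H) (lTensor_comul_comul_one (k := k) (H := H))
  rw [← LinearMap.lTensor_comp_apply, ← LinearMap.lTensor_comp_apply, hF, hF'] at h
  rw [rTensor_εs_eq, ← h, ← LinearMap.mulLeft_apply (R := k), LinearMap.mulLeft_tmul,
    LinearMap.mulLeft_one]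
  rfl

theorem map_εs_εt_comm_comul (y : H) :
    TensorProduct.map (εs k H) (εt k H) (TensorProduct.comm k H H (comul y)) =
      TensorProduct.map (εs k H) (εt k H) (comul y) := by
  have h : εs k H ∘ₗ contractSnd (counitForm k H) (TensorProduct.comm k H H (comul y)) =
      εs k H ∘ₗ contractSnd (counitForm k H) (comul y) := by
    ext x
    refine εs_congr fun z => ?_
    rw [counit_contractSnd_comm_comul_mul, counit_contractSnd_comul_mul]
  have map_eq (u : H ⊗[k] H) : TensorProduct.map (εs k H) (εt k H) u =
      (εs k H ∘ₗ contractSnd (counitForm k H) u).rTensor H (comul (1 : H)) := by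
    rw [← LinearMap.rTensor_comp_lTensor, LinearMap.comp_apply, lTensor_εt_eq,
      ← LinearMap.rTensor_comp_apply]
  rw [map_eq, map_eq, h]

variable (k H) in
/-- The comultiplication of a weak bialgebra, as a non-unital algebra homomorphism. -/
noncomputable def comulNonUnitalAlgHom : H →ₙₐ[k] H ⊗[k] H where
  __ := comul (R := k) (A := H)
  map_zero' := (comul (R := k) (A := H)).map_zero
  map_mul' := comul_mul

theorem map_mul'_comp_comul :
    TensorProduct.map (LinearMap.mul' k H) (LinearMap.mul' k H) ∘ₗ comul =
      comul ∘ₗ LinearMap.mul' k H := by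
  ext x y
  change (TensorProduct.map (LinearMap.mul' k H) (LinearMap.mul' k H) ∘ₗ
      (TensorProduct.tensorTensorTensorComm k H H H H).toLinearMap) (comul x ⊗ₜ comul y) =
    comul (x * y)
  rw [← LinearMap.mul'_tensor, LinearMap.mul'_apply, comul_mul]

end WeakBialgebra

namespace WeakHopfAlgebra

open WeakBialgebra

variable [WeakHopfAlgebra k H]

theorem convMul_id_aS : toConv LinearMap.id * toConv (aS k H) = toConv (εt k H) :=
  congrArg toConv (LinearMap.ext mul_antipode)

theorem convMul_aS_id : toConv (aS k H) * toConv LinearMap.id = toConv (εs k H) :=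
  congrArg toConv (LinearMap.ext antipode_mul)

theorem convMul_aS_εt : toConv (aS k H) * toConv (εt k H) = toConv (aS k H) := by
  rw [← convMul_id_aS]
  ext x
  refine Eq.trans ?_ (antipode_mul_antipode (k := k) x)
  rw [LinearMap.convMul_apply, ← (ℛ k x).eq]
  simp [aS, LinearMap.lTensor]

theorem convMul_εs_aS : toConv (εs k H) * toConv (aS k H) = toConv (aS k H) := by
  rw [← convMul_aS_id, mul_assoc, convMul_id_aS, convMul_aS_εt]

theorem aS_one : aS k H 1 = 1 :=
  calc aS k H (1 : H)
    _ = LinearMap.mul' k H (TensorProduct.map (εs k H) (aS k H) (comul (1 : H))) :=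
        (congrArg (fun f : WithConv (H →ₗ[k] H) => f (1 : H)) convMul_εs_aS).symm
    _ = LinearMap.mul' k H ((aS k H).lTensor H ((εs k H).rTensor H (comul (1 : H)))) := by
        rw [← LinearMap.lTensor_comp_rTensor, LinearMap.comp_apply]
    _ = εt k H 1 := by
        rw [rTensor_εs_comul, ← Algebra.TensorProduct.one_def, one_mul]
        exact mul_antipode 1
    _ = 1 := εt_one

theorem counit_aS (x : H) : counit (R := k) (aS k H x) = counit (R := k) x := by
  have h : counit (R := k) ∘ₗ LinearMap.mul' k H ∘ₗ TensorProduct.map (aS k H) (εt k H) =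
      counit ∘ₗ LinearMap.mul' k H ∘ₗ TensorProduct.map (aS k H) LinearMap.id := by
    ext a b
    exact counit_mul_εt _ _
  calc counit (R := k) (aS k H x)
    _ = counit (R := k) ((toConv (aS k H) * toConv (εt k H)) x) := by rw [convMul_aS_εt]
    _ = counit (R := k) ((toConv (aS k H) * toConv (LinearMap.id (R := k) (M := H))) x) :=
        LinearMap.congr_fun h (comul x)
    _ = counit (R := k) (εs k H x * 1) := by rw [convMul_aS_id, mul_one]
    _ = counit (R := k) x := by rw [counit_εs_mul, mul_one]

theorem convPostcomp_comul_εt :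
    convPostcomp (comulNonUnitalAlgHom k H) (toConv (εt k H)) =
      convTmulOne (toConv LinearMap.id) * convOneTmul (toConv (εt k H)) *
        convTmulOne (toConv (aS k H)) := by
  have h : convTmulOne (toConv LinearMap.id) * convOneTmul (toConv (εt k H)) =
      toConv (LinearMap.mulLeft k (comul (1 : H)) ∘ₗ
        (convTmulOne (B := H) (toConv (LinearMap.id (R := k) (M := H)))).ofConv) := by
    rw [convTmulOne_mul_convOneTmul]
    exact congrArg toConv (LinearMap.ext lTensor_εt_comul)
  rw [h, mulLeft_comp_convMul, ← map_mul, convMul_id_aS]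
  exact congrArg toConv (LinearMap.ext comul_εt)

theorem convPostcomp_comul_εs :
    convPostcomp (comulNonUnitalAlgHom k H) (toConv (εs k H)) =
      convOneTmul (toConv (aS k H)) * convTmulOne (toConv (εs k H)) *
        convOneTmul (toConv LinearMap.id) := by
  have h : convTmulOne (toConv (εs k H)) * convOneTmul (toConv LinearMap.id) =
      toConv (LinearMap.mulRight k (comul (1 : H)) ∘ₗ
        (convOneTmul (A := H) (toConv (LinearMap.id (R := k) (M := H)))).ofConv) := by
    rw [convTmulOne_mul_convOneTmul]
    exact congrArg toConv (LinearMap.ext rTensor_εs_comul)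
  rw [mul_assoc, h, convMul_mulRight_comp, ← map_mul, convMul_aS_id]
  exact congrArg toConv (LinearMap.ext comul_εs)

theorem comul_comp_aS :
    comul ∘ₗ aS k H = TensorProduct.map (aS k H) (aS k H) ∘ₗ
      (TensorProduct.comm k H H).toLinearMap ∘ₗ comul := by
  have hx : convPostcomp (comulNonUnitalAlgHom k H) (toConv LinearMap.id) =
      convTmulOne (toConv LinearMap.id) * convOneTmul (toConv LinearMap.id) := by
    rw [convTmulOne_mul_convOneTmul, TensorProduct.map_id]
    rfl
  have hcomm : Commute (convTmulOne (B := H) (toConv (εs k H)))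
      (convOneTmul (toConv (εt k H))) := by
    rw [Commute, SemiconjBy, convTmulOne_mul_convOneTmul, convOneTmul_mul_convTmulOne]
    exact congrArg toConv (LinearMap.ext fun x => (map_εs_εt_comm_comul x).symm)
  have h := map_eq_mul_map_of_outer_inverse (M := WithConv (H →ₗ[k] H))
    (N := WithConv (H →ₗ[k] H ⊗[k] H)) (convPostcomp (comulNonUnitalAlgHom k H)) convTmulOne
    convOneTmul convMul_id_aS convMul_aS_id convMul_εs_aS hx hcomm convPostcomp_comul_εt
    convPostcomp_comul_εs
  exact congrArg ofConv (h.trans (convOneTmul_mul_convTmulOne _ _))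

theorem convPrecomp_mul'_εt :
    convPrecomp (LinearMap.mul' k H) map_mul'_comp_comul (toConv (εt k H)) =
      convFst H (toConv LinearMap.id) * convSnd H (toConv (εt k H)) *
        convFst H (toConv (aS k H)) := by
  ext x y
  have h : (convFst H (toConv LinearMap.id) * convSnd H (toConv (εt k H))).ofConv ∘ₗ
      (TensorProduct.mk k H H).flip y = LinearMap.mulRight k (εt k H y) :=
    LinearMap.ext fun a => convFst_mul_convSnd_tmul _ _ a y
  change εt k H (x * y) = (_ * convFst H (toConv (aS k H))) (x ⊗ₜ y)
  rw [convMul_convFst_tmul, h, ← εt_mul_εt, ← mul_antipode, comul_mul_εt,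
    LinearMap.convMul_apply, ← (ℛ k x).eq]
  simp [aS, Finset.sum_mul]

theorem convPrecomp_mul'_εs :
    convPrecomp (LinearMap.mul' k H) map_mul'_comp_comul (toConv (εs k H)) =
      convSnd H (toConv (aS k H)) * convFst H (toConv (εs k H)) *
        convSnd H (toConv LinearMap.id) := by
  ext x y
  have h : (convFst H (toConv (εs k H)) * convSnd H (toConv LinearMap.id)).ofConv ∘ₗ
      TensorProduct.mk k H H x = LinearMap.mulLeft k (εs k H x) :=
    LinearMap.ext fun b => convFst_mul_convSnd_tmul _ _ x b
  rw [mul_assoc]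
  change εs k H (x * y) = (convSnd H (toConv (aS k H)) * _) (x ⊗ₜ y)
  rw [convSnd_convMul_tmul, h, ← εs_εs_mul, ← antipode_mul, comul_εs_mul,
    LinearMap.convMul_apply, ← (ℛ k y).eq]
  simp [aS, Finset.mul_sum]

theorem aS_comp_mul' :
    aS k H ∘ₗ LinearMap.mul' k H = LinearMap.mul' k H ∘ₗ TensorProduct.map (aS k H) (aS k H) ∘ₗ
      (TensorProduct.comm k H H).toLinearMap := by
  have hx : convPrecomp (LinearMap.mul' k H) map_mul'_comp_comul (toConv LinearMap.id) =
      convFst H (toConv LinearMap.id) * convSnd H (toConv LinearMap.id) := by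
    ext x y
    exact (convFst_mul_convSnd_tmul (R := k) (A := H) (toConv .id) (toConv .id) x y).symm
  have hcomm : Commute (convFst H (toConv (εs k H)) : WithConv (H ⊗[k] H →ₗ[k] H))
      (convSnd H (toConv (εt k H))) := by
    rw [Commute, SemiconjBy]
    ext x y
    exact (convFst_mul_convSnd_tmul _ _ x y).trans
      ((commute_εs_εt x y).eq.trans (convSnd_mul_convFst_tmul _ _ x y).symm)
  have h := map_eq_mul_map_of_outer_inverse (M := WithConv (H →ₗ[k] H))
    (N := WithConv (H ⊗[k] H →ₗ[k] H)) (convPrecomp (LinearMap.mul' k H) map_mul'_comp_comul)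
    (convFst H) (convSnd H) convMul_id_aS convMul_aS_id convMul_εs_aS hx hcomm convPrecomp_mul'_εt
    convPrecomp_mul'_εs
  ext x y
  exact (congrArg (fun f : WithConv (H ⊗[k] H →ₗ[k] H) => f (x ⊗ₜ y)) h).trans
    (convSnd_mul_convFst_tmul _ _ x y)

end WeakHopfAlgebra

end

/-- The antipode of a weak Hopf algebra over a field is an algebra
antihomomorphism and a coalgebra antihomomorphism: `S(xy) = S(y)S(x)`, `S(1) = 1`,
`Δ(S(x)) = Σ S(x⁽²⁾) ⊗ S(x⁽¹⁾)` and `ε(S(x)) = ε(x)`. -/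
theorem antipode_antihomomorphism [WeakHopfAlgebra k H] :
    (∀ x y : H, aS k H (x * y) = aS k H y * aS k H x) ∧
    (aS k H (1 : H) = 1) ∧
    (∀ x : H, Coalgebra.comul (R := k) (aS k H x) =
      (TensorProduct.map (aS k H) (aS k H))
        ((TensorProduct.comm k H H) (Coalgebra.comul (R := k) x))) ∧
    (∀ x : H, Coalgebra.counit (R := k) (aS k H x) = Coalgebra.counit (R := k) x) := by
  refine ⟨fun x y => ?_, WeakHopfAlgebra.aS_one, fun x => ?_, WeakHopfAlgebra.counit_aS⟩
  · simpa using LinearMap.congr_fun (WeakHopfAlgebra.aS_comp_mul' (k := k) (H := H)) (x ⊗ₜ[k] y)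
  · exact LinearMap.congr_fun (WeakHopfAlgebra.comul_comp_aS (k := k) (H := H)) x
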